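/- Let {Qⁿ}ₙ₌₀ᴺ be the positive sequence generated by the P-DRLM1 scheme with f = 0. Then for every n = 0, 1, …, N one has Qⁿ ≤ C₀ := √(1 + (‖u⁰‖² + τ²‖∇p⁰‖²)/(2θ)) and ‖uⁿ‖ ≤ M̃ := √(‖u⁰‖² + τ²‖∇p⁰‖² + 2θ); in particular C₀ ≥ 1 and these bounds hold for every time step τ > 0. -/

import Mathlib

open MeasureTheory Real
open scoped RealInnerProductSpace

noncomputable section

/-- Euclidean space `ℝ^d`. -/
abbrev Euc (d : ℕ) := EuclideanSpace ℝ (Fin d)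

/-- Partial derivative of a scalar field in the `j`-th coordinate direction. -/
def pder {d : ℕ} (j : Fin d) (f : Euc d → ℝ) (x : Euc d) : ℝ :=
  fderiv ℝ f x (EuclideanSpace.single j 1)

/-- Gradient of a scalar field. -/
def grd {d : ℕ} (f : Euc d → ℝ) (x : Euc d) : Euc d :=
  (WithLp.equiv 2 (Fin d → ℝ)).symm fun j => pder j f x

/-- Laplacian of a scalar field. -/
def lap {d : ℕ} (f : Euc d → ℝ) (x : Euc d) : ℝ :=
  ∑ j, pder j (fun y => pder j f y) x

/-- Componentwise Laplacian of a vector field. -/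
def vlap {d : ℕ} (u : Euc d → Euc d) (x : Euc d) : Euc d :=
  (WithLp.equiv 2 (Fin d → ℝ)).symm fun i => lap (fun y => u y i) x

/-- Divergence of a vector field. -/
def divg {d : ℕ} (u : Euc d → Euc d) (x : Euc d) : ℝ :=
  ∑ j, pder j (fun y => u y j) x

/-- Convection term `(u·∇)v`. -/
def conv {d : ℕ} (u v : Euc d → Euc d) (x : Euc d) : Euc d :=
  (WithLp.equiv 2 (Fin d → ℝ)).symm fun i => ∑ j, u x j * pder j (fun y => v y i) x

/-- `L²(Ω)` inner product of vector fields. -/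
def ipL2 {d : ℕ} (Ω : Set (Euc d)) (u v : Euc d → Euc d) : ℝ :=
  ∫ x in Ω, ⟪u x, v x⟫

/-- Squared `L²(Ω)` norm of a vector field. -/
def nsq {d : ℕ} (Ω : Set (Euc d)) (u : Euc d → Euc d) : ℝ :=
  ∫ x in Ω, ‖u x‖ ^ 2

/-- Squared `L²(Ω)` norm of the gradient of a scalar field. -/
def gnsq {d : ℕ} (Ω : Set (Euc d)) (p : Euc d → ℝ) : ℝ :=
  ∫ x in Ω, ‖grd p x‖ ^ 2

/-- Squared `L²(Ω)` norm of the gradient of a vector field. -/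
def vgnsq {d : ℕ} (Ω : Set (Euc d)) (u : Euc d → Euc d) : ℝ :=
  ∫ x in Ω, ∑ i, ‖grd (fun y => u y i) x‖ ^ 2

/-- `(∇p, v)` in `L²(Ω)`. -/
def ipGrad {d : ℕ} (Ω : Set (Euc d)) (p : Euc d → ℝ) (v : Euc d → Euc d) : ℝ :=
  ∫ x in Ω, ⟪grd p x, v x⟫

/-- `(∇p, ∇q)` in `L²(Ω)`. -/
def ipGG {d : ℕ} (Ω : Set (Euc d)) (p q : Euc d → ℝ) : ℝ :=
  ∫ x in Ω, ⟪grd p x, grd q x⟫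

/-- `(∇u, ∇v)` in `L²(Ω)` for vector fields. -/
def ipVG {d : ℕ} (Ω : Set (Euc d)) (u v : Euc d → Euc d) : ℝ :=
  ∫ x in Ω, ∑ i, ⟪grd (fun y => u y i) x, grd (fun y => v y i) x⟫

/-- Trilinear form `b(u,v,w) = ∫_Ω ((u·∇)v)·w`. -/
def triB {d : ℕ} (Ω : Set (Euc d)) (u v w : Euc d → Euc d) : ℝ :=
  ∫ x in Ω, ⟪conv u v x, w x⟫

/-- Discrete energy `K(u,p) = ½(‖u‖² + τ²‖∇p‖²)`. -/
def Ke {d : ℕ} (Ω : Set (Euc d)) (τ : ℝ) (u : Euc d → Euc d) (p : Euc d → ℝ) : ℝ :=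
  (1/2) * (nsq Ω u + τ^2 * gnsq Ω p)

/-- Squared `H¹(Ω)` norm of a vector field. -/
def h1sq {d : ℕ} (Ω : Set (Euc d)) (u : Euc d → Euc d) : ℝ :=
  nsq Ω u + vgnsq Ω u

/-- Squared `H²(Ω)` norm of a vector field. -/
def h2sq {d : ℕ} (Ω : Set (Euc d)) (u : Euc d → Euc d) : ℝ :=
  h1sq Ω u + ∫ x in Ω, ∑ i, ∑ j, ∑ k,
    (pder k (fun y => pder j (fun z => u z i) y) x) ^ 2

/-- `H⁻¹(Ω)` norm, defined by duality against `H¹₀(Ω)` vector fields. -/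
def negNorm {d : ℕ} (Ω : Set (Euc d)) (f : Euc d → Euc d) : ℝ :=
  sSup {r : ℝ | ∃ v : Euc d → Euc d, (∀ x ∈ frontier Ω, v x = 0) ∧
    r = (∫ x in Ω, ⟪f x, v x⟫) / Real.sqrt (vgnsq Ω v)}

/-- One step of the first-order pressure-correction DRLM scheme (P-DRLM1):
from `(uⁿ, pⁿ, Qⁿ)` the quadruple `(ûⁿ⁺¹, uⁿ⁺¹, pⁿ⁺¹, Qⁿ⁺¹)` satisfies the
prediction step (with force `f` and no-slip boundary condition on `ûⁿ⁺¹`),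
the projection step, incompressibility (with vanishing normal trace, `nrm`
being the outward normal of `Ω`), and the dynamically regularized Lagrange
multiplier energy equation. -/
def PDRLM1 {d : ℕ} (Ω : Set (Euc d)) (ν τ θ : ℝ) (f : Euc d → Euc d)
    (u : Euc d → Euc d) (p : Euc d → ℝ) (Q : ℝ)
    (uh u' : Euc d → Euc d) (p' : Euc d → ℝ) (Q' : ℝ)
    (nrm : Euc d → Euc d) : Prop :=
  (∀ x ∈ Ω, (1/τ) • (uh x - u x) + Q' • conv u u x + grd p x - ν • vlap uh x = f x) ∧
  (∀ x ∈ frontier Ω, uh x = 0) ∧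
  (∀ x ∈ Ω, (1/τ) • (u' x - uh x) + grd (fun y => p' y - p y) x = 0) ∧
  (∀ x ∈ Ω, divg u' x = 0) ∧
  (∀ x ∈ frontier Ω, ⟪u' x, nrm x⟫ = 0) ∧
  ((Ke Ω τ u' p' - Ke Ω τ u p) / τ + θ * (Q' ^ 2 - Q ^ 2) / τ
    = ipL2 Ω (fun x => (1/τ) • (uh x - u x)) uh + Q' * triB Ω u u uh + ipGrad Ω p uh)

/-!
Testing the prediction step with `ûⁿ⁺¹` turns the right-hand side of the multiplier equation into
`ν (Δûⁿ⁺¹, ûⁿ⁺¹)`. This is nonpositive, so the modified energy `K(uⁿ, pⁿ) + θ (Qⁿ)²` never exceeds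
its initial value `K(u⁰, p⁰) + θ`, and each of its summands is bounded by that value.

The inequality `(Δw, w) ≤ 0` for `w` vanishing on `∂Ω` has to be obtained without any regularity of
`∂Ω`. The extension of `w` by zero is Lipschitz, so Lipschitz integration by parts on the whole
space moves one derivative onto it. The boundary may have positive measure, but the directional
derivatives of `w` and of its extension never have opposite signs.
-/

section ZeroExtension

open Filter Set Topology
open scoped NNReal

theorem inter_frontier_nonempty_of_isPreconnected {X : Type*} [TopologicalSpace X] {s t : Set X}
    (ht : IsPreconnected t) (hs : (t ∩ s).Nonempty) (hsc : (t ∩ sᶜ).Nonempty) :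
    (t ∩ frontier s).Nonempty := by
  by_contra hempty
  have hcover : t ⊆ interior s ∪ interior sᶜ := fun x hx ↦ by
    have hxs : x ∉ frontier s := fun h ↦ hempty ⟨x, hx, h⟩
    rwa [← mem_compl_iff, compl_frontier_eq_union_interior] at hxs
  rcases ht.subset_or_subset isOpen_interior isOpen_interior
    (disjoint_compl_right.mono interior_subset interior_subset) hcover with h | h
  · obtain ⟨x, hx, hxs⟩ := hsc
    exact hxs (interior_subset (h hx))
  · obtain ⟨x, hx, hxs⟩ := hs
    exact interior_subset (h hx) hxs

theorem indicator_eventuallyEq_or_eventuallyEq_zero {X M : Type*} [TopologicalSpace X] [Zero M]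
    {s : Set X} {x : X} (f : X → M) (hx : x ∉ frontier s) :
    s.indicator f =ᶠ[𝓝 x] f ∨ s.indicator f =ᶠ[𝓝 x] 0 := by
  rw [← mem_compl_iff, compl_frontier_eq_union_interior, mem_union, mem_interior_iff_mem_nhds,
    mem_interior_iff_mem_nhds] at hx
  exact hx.imp eqOn_indicator.eventuallyEq_of_mem eqOn_indicator'.eventuallyEq_of_mem

variable {E : Type*} [NormedAddCommGroup E] [NormedSpace ℝ E] {s : Set E}

theorem lipschitzWith_indicator {F : Type*} [SeminormedAddCommGroup F] {K : ℝ≥0} {f : E → F}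
    (hf : LipschitzWith K f) (hf₀ : ∀ x ∈ frontier s, f x = 0) :
    LipschitzWith K (s.indicator f) := by
  have hcross : ∀ x ∈ s, ∀ y ∉ s, ‖f x‖ ≤ K * dist x y := fun x hx y hy ↦ by
    obtain ⟨z, hz, hzs⟩ := inter_frontier_nonempty_of_isPreconnected
      (convex_segment (𝕜 := ℝ) x y).isPreconnected
      ⟨x, left_mem_segment ℝ x y, hx⟩ ⟨y, right_mem_segment ℝ x y, hy⟩
    calc ‖f x‖ = dist (f x) (f z) := by rw [hf₀ z hzs, dist_zero_right]
      _ ≤ K * dist x z := hf.dist_le_mul x z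
      _ ≤ K * dist x y := by
        gcongr
        linarith [dist_add_dist_of_mem_segment hz, dist_nonneg (x := z) (y := y)]
  refine LipschitzWith.of_dist_le_mul fun x y ↦ ?_
  by_cases hx : x ∈ s <;> by_cases hy : y ∈ s
  · simpa [hx, hy] using hf.dist_le_mul x y
  · simpa [hx, hy] using hcross x hx y hy
  · simpa [hx, hy, dist_comm x y] using hcross y hy x hx
  · simpa [hx, hy] using by positivity

theorem lineDeriv_indicator_mul_lineDeriv_nonneg {f : E → ℝ} (hf₀ : ∀ x ∈ frontier s, f x = 0)
    (x v : E) : 0 ≤ lineDeriv ℝ (s.indicator f) x v * lineDeriv ℝ f x v := by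
  by_cases hx : x ∈ frontier s
  swap
  · rcases indicator_eventuallyEq_or_eventuallyEq_zero f hx with h | h
    · rw [h.lineDeriv_eq]
      exact mul_self_nonneg _
    · rw [h.lineDeriv_eq]
      simp [lineDeriv]
  by_cases hind : LineDifferentiableAt ℝ (s.indicator f) x v
  swap
  · simp [lineDeriv_zero_of_not_lineDifferentiableAt hind]
  by_cases hdiff : LineDifferentiableAt ℝ f x v
  swap
  · simp [lineDeriv_zero_of_not_lineDifferentiableAt hdiff]
  -- Both functions vanish at `x`, so the difference quotients have the signs of their values.
  refine ge_of_tendsto' (hind.hasLineDerivAt.tendsto_slope_zero.mul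
    hdiff.hasLineDerivAt.tendsto_slope_zero) fun t ↦ ?_
  have hindx : s.indicator f x = 0 := by simp [hf₀ x hx]
  have hval : 0 ≤ s.indicator f (x + t • v) * f (x + t • v) := by
    by_cases h : x + t • v ∈ s <;> simp [h, mul_self_nonneg]
  calc 0 ≤ t⁻¹ ^ 2 * (s.indicator f (x + t • v) * f (x + t • v)) := by positivity
    _ = _ := by
      rw [hindx, hf₀ x hx, smul_eq_mul, smul_eq_mul]
      ring

end ZeroExtension

section SecondDerivative

open Set Topology
open scoped NNReal

variable {E : Type*} [NormedAddCommGroup E] [NormedSpace ℝ E] [FiniteDimensional ℝ E]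
  {s : Set E}

theorem exists_contDiff_hasCompactSupport_eventuallyEq {F : Type*} [NormedAddCommGroup F]
    [NormedSpace ℝ F] {n : ℕ∞} (hsb : Bornology.IsBounded s) {f : E → F} (hf : ContDiff ℝ n f) :
    ∃ g : E → F, ContDiff ℝ n g ∧ HasCompactSupport g ∧ ∀ x ∈ closure s, g =ᶠ[𝓝 x] f := by
  obtain ⟨r, hr, hsr⟩ := hsb.closure.subset_ball_lt 0 0
  let χ : ContDiffBump (0 : E) := ⟨r, r + 1, hr, lt_add_one r⟩
  refine ⟨fun x ↦ χ x • f x, χ.contDiff.smul hf, χ.hasCompactSupport.smul_right, fun x hx ↦ ?_⟩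
  filter_upwards [χ.eventuallyEq_one_of_mem_ball (hsr hx)] with y hy
  rw [hy, Pi.one_apply, one_smul]

variable [MeasurableSpace E] [BorelSpace E] {μ : Measure E} [μ.IsAddHaarMeasure]

theorem setIntegral_mul_lineDeriv_lineDeriv_nonpos_of_lipschitzWith (hs : MeasurableSet s)
    (hsb : Bornology.IsBounded s) {f : E → ℝ} {v : E} {K L : ℝ≥0} (hf : LipschitzWith K f)
    (hf' : LipschitzWith L fun x ↦ lineDeriv ℝ f x v) (hf₀ : ∀ x ∈ frontier s, f x = 0) :
    ∫ x in s, f x * lineDeriv ℝ (fun y ↦ lineDeriv ℝ f y v) x v ∂μ ≤ 0 := by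
  have hsupp : HasCompactSupport (s.indicator f) :=
    .of_support_subset_isCompact hsb.isCompact_closure
      (support_indicator_subset.trans subset_closure)
  calc ∫ x in s, f x * lineDeriv ℝ (fun y ↦ lineDeriv ℝ f y v) x v ∂μ
      = ∫ x, lineDeriv ℝ (fun y ↦ lineDeriv ℝ f y v) x v * s.indicator f x ∂μ := by
        rw [← integral_indicator hs]
        simp only [indicator_mul_left, mul_comm]
    _ = ∫ x, lineDeriv ℝ (s.indicator f) x (-v) * lineDeriv ℝ f x v ∂μ :=
        hf'.integral_lineDeriv_mul_eq (lipschitzWith_indicator hf hf₀) hsupp v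
    _ = -∫ x, lineDeriv ℝ (s.indicator f) x v * lineDeriv ℝ f x v ∂μ := by
        simp only [lineDeriv_neg, neg_mul, integral_neg]
    _ ≤ 0 := neg_nonpos.2 <|
        integral_nonneg fun x ↦ lineDeriv_indicator_mul_lineDeriv_nonneg hf₀ x v

theorem setIntegral_mul_lineDeriv_lineDeriv_nonpos (hs : MeasurableSet s)
    (hsb : Bornology.IsBounded s) {f : E → ℝ} (hf : ContDiff ℝ 2 f)
    (hf₀ : ∀ x ∈ frontier s, f x = 0) (v : E) :
    ∫ x in s, f x * lineDeriv ℝ (fun y ↦ lineDeriv ℝ f y v) x v ∂μ ≤ 0 := by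
  obtain ⟨g, hg, hgc, hgf⟩ := exists_contDiff_hasCompactSupport_eventuallyEq (n := 2) hsb hf
  have hg' : (fun x ↦ lineDeriv ℝ g x v) = fun x ↦ fderiv ℝ g x v :=
    funext fun x ↦ (hg.differentiable two_ne_zero x).lineDeriv_eq_fderiv
  obtain ⟨K, hK⟩ := hg.lipschitzWith_of_hasCompactSupport hgc two_ne_zero
  obtain ⟨L, hL⟩ : ∃ L, LipschitzWith L fun x ↦ lineDeriv ℝ g x v := by
    rw [hg']
    have hg₁ : ContDiff ℝ 1 fun x ↦ fderiv ℝ g x v :=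
      (hg.fderiv_right (by norm_num)).clm_apply contDiff_const
    exact hg₁.lipschitzWith_of_hasCompactSupport (hgc.fderiv_apply ℝ v) one_ne_zero
  have hg₀ : ∀ x ∈ frontier s, g x = 0 := fun x hx ↦
    (hgf x (frontier_subset_closure hx)).eq_of_nhds.trans (hf₀ x hx)
  refine (setIntegral_congr_fun hs fun x hx ↦ ?_).trans_le
    (setIntegral_mul_lineDeriv_lineDeriv_nonpos_of_lipschitzWith (μ := μ) hs hsb hK hL hg₀)
  have hgfx := hgf x (subset_closure hx)
  have hgfx' : (fun y ↦ lineDeriv ℝ g y v) =ᶠ[𝓝 x] fun y ↦ lineDeriv ℝ f y v :=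
    hgfx.eventually_nhds.mono fun y (hy : g =ᶠ[𝓝 y] f) ↦ hy.lineDeriv_eq
  simp only [hgfx.eq_of_nhds, hgfx'.lineDeriv_eq]

end SecondDerivative

section Integrability

variable {X : Type*} [PseudoMetricSpace X] [ProperSpace X] [MeasurableSpace X]
  [OpensMeasurableSpace X] {μ : Measure X} [IsFiniteMeasureOnCompacts μ] {s : Set X}

theorem integrableOn_of_continuous_of_isBounded {F : Type*} [NormedAddCommGroup F] {f : X → F}
    (hf : Continuous f) (hs : Bornology.IsBounded s) : IntegrableOn f s μ :=
  have hK := hs.isCompact_closure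
  (hf.continuousOn.integrableOn_compact' hK isClosed_closure.measurableSet).mono_set subset_closure

theorem integrableOn_inner_of_continuous_of_isBounded {F : Type*} [NormedAddCommGroup F]
    [InnerProductSpace ℝ F] {f g : X → F} (hf : Continuous f) (hg : Continuous g)
    (hs : Bornology.IsBounded s) : IntegrableOn (fun x ↦ ⟪f x, g x⟫) s μ :=
  integrableOn_of_continuous_of_isBounded (hf.inner hg) hs

end Integrability

section DifferentialOperators

variable {d : ℕ}

theorem contDiff_pder {m n : WithTop ℕ∞} {f : Euc d → ℝ} (hf : ContDiff ℝ n f) (hmn : m + 1 ≤ n)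
    (j : Fin d) : ContDiff ℝ m (pder j f) :=
  (hf.fderiv_right hmn).clm_apply contDiff_const

theorem pder_eq_lineDeriv {f : Euc d → ℝ} (hf : Differentiable ℝ f) (j : Fin d) :
    pder j f = fun x ↦ lineDeriv ℝ f x (EuclideanSpace.single j 1) :=
  funext fun x ↦ (hf x).lineDeriv_eq_fderiv.symm

theorem continuous_pder {f : Euc d → ℝ} (hf : ContDiff ℝ 1 f) (j : Fin d) :
    Continuous (pder j f) :=
  (contDiff_pder (m := 0) hf (by norm_num) j).continuous

theorem continuous_pder_pder {f : Euc d → ℝ} (hf : ContDiff ℝ 2 f) (i j : Fin d) :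
    Continuous (pder i (pder j f)) :=
  continuous_pder (contDiff_pder hf (by norm_num) j) i

theorem continuous_grd {p : Euc d → ℝ} (hp : ContDiff ℝ 1 p) : Continuous (grd p) :=
  (PiLp.continuous_toLp 2 _).comp <| continuous_pi (continuous_pder hp)

theorem continuous_lap {f : Euc d → ℝ} (hf : ContDiff ℝ 2 f) : Continuous (lap f) :=
  continuous_finsetSum _ fun j _ ↦ continuous_pder_pder hf j j

theorem continuous_vlap {u : Euc d → Euc d} (hu : ContDiff ℝ 2 u) : Continuous (vlap u) :=
  (PiLp.continuous_toLp 2 _).comp <| continuous_pi fun i ↦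
    continuous_lap (contDiff_euclidean.1 hu i)

theorem continuous_conv {u v : Euc d → Euc d} (hu : Continuous u) (hv : ContDiff ℝ 1 v) :
    Continuous (conv u v) :=
  (PiLp.continuous_toLp 2 _).comp <| continuous_pi fun i ↦ continuous_finsetSum _ fun j _ ↦
    ((EuclideanSpace.proj j).continuous.comp hu).mul (continuous_pder (contDiff_euclidean.1 hv i) j)

variable {Ω : Set (Euc d)}

theorem setIntegral_mul_lap_nonpos (hΩ : MeasurableSet Ω) (hΩb : Bornology.IsBounded Ω)
    {w : Euc d → ℝ} (hw : ContDiff ℝ 2 w) (hw₀ : ∀ x ∈ frontier Ω, w x = 0) :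
    ∫ x in Ω, w x * lap w x ≤ 0 := by
  have hint : ∀ j, IntegrableOn (fun x ↦ w x * pder j (pder j w) x) Ω := fun j ↦
    integrableOn_of_continuous_of_isBounded (hw.continuous.mul (continuous_pder_pder hw j j)) hΩb
  calc ∫ x in Ω, w x * lap w x
      = ∑ j, ∫ x in Ω, w x * pder j (pder j w) x := by
        rw [← integral_finsetSum _ fun j _ ↦ hint j]
        simp only [lap, Finset.mul_sum]
    _ ≤ 0 := Finset.sum_nonpos fun j _ ↦ by
        rw [pder_eq_lineDeriv ((contDiff_pder hw (by norm_num) j).differentiable one_ne_zero),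
          pder_eq_lineDeriv (hw.differentiable two_ne_zero)]
        exact setIntegral_mul_lineDeriv_lineDeriv_nonpos hΩ hΩb hw hw₀ _

theorem ipL2_vlap_self_nonpos (hΩ : MeasurableSet Ω) (hΩb : Bornology.IsBounded Ω)
    {u : Euc d → Euc d} (hu : ContDiff ℝ 2 u) (hu₀ : ∀ x ∈ frontier Ω, u x = 0) :
    ipL2 Ω (vlap u) u ≤ 0 := by
  have hui : ∀ i, ContDiff ℝ 2 fun x ↦ u x i := contDiff_euclidean.1 hu
  have hint : ∀ i, IntegrableOn (fun x ↦ u x i * lap (fun y ↦ u y i) x) Ω := fun i ↦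
    integrableOn_of_continuous_of_isBounded ((hui i).continuous.mul (continuous_lap (hui i))) hΩb
  calc ipL2 Ω (vlap u) u
      = ∑ i, ∫ x in Ω, u x i * lap (fun y ↦ u y i) x := by
        rw [← integral_finsetSum _ fun i _ ↦ hint i]
        simp [ipL2, vlap, PiLp.inner_apply]
    _ ≤ 0 := Finset.sum_nonpos fun i _ ↦
        setIntegral_mul_lap_nonpos hΩ hΩb (hui i) fun x hx ↦ by simp [hu₀ x hx]

end DifferentialOperators

section ModifiedEnergy

variable {d : ℕ} {Ω : Set (Euc d)} {ν τ θ : ℝ} {f u uh u' nrm : Euc d → Euc d}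
  {p p' : Euc d → ℝ} {Q Q' : ℝ}

/-- The modified discrete energy `K(u, p) + θ Q²`, which the unforced scheme dissipates. -/
def modifiedEnergy (Ω : Set (Euc d)) (τ θ : ℝ) (u : Euc d → Euc d) (p : Euc d → ℝ) (Q : ℝ) : ℝ :=
  Ke Ω τ u p + θ * Q ^ 2

theorem nsq_nonneg (Ω : Set (Euc d)) (u : Euc d → Euc d) : 0 ≤ nsq Ω u :=
  integral_nonneg fun _ ↦ by positivity

theorem gnsq_nonneg (Ω : Set (Euc d)) (p : Euc d → ℝ) : 0 ≤ gnsq Ω p :=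
  integral_nonneg fun _ ↦ by positivity

theorem Ke_nonneg (Ω : Set (Euc d)) (τ : ℝ) (u : Euc d → Euc d) (p : Euc d → ℝ) :
    0 ≤ Ke Ω τ u p := by
  have := nsq_nonneg Ω u
  have := gnsq_nonneg Ω p
  unfold Ke
  positivity

theorem abs_le_sqrt_modifiedEnergy_div (hθ : 0 < θ) :
    |Q| ≤ √(modifiedEnergy Ω τ θ u p Q / θ) := by
  refine abs_le_sqrt ?_
  rw [le_div_iff₀' hθ]
  exact le_add_of_nonneg_left (Ke_nonneg Ω τ u p)

theorem nsq_le_two_mul_modifiedEnergy (hθ : 0 ≤ θ) :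
    nsq Ω u ≤ 2 * modifiedEnergy Ω τ θ u p Q := by
  have hp := mul_nonneg (sq_nonneg τ) (gnsq_nonneg Ω p)
  have hQ := mul_nonneg hθ (sq_nonneg Q)
  unfold modifiedEnergy Ke
  linarith

namespace PDRLM1

theorem modifiedEnergy_sub_div_eq (h : PDRLM1 Ω ν τ θ f u p Q uh u' p' Q' nrm)
    (hΩ : MeasurableSet Ω) (hΩb : Bornology.IsBounded Ω) (hu : ContDiff ℝ 1 u)
    (huh : ContDiff ℝ 2 uh) (hp : ContDiff ℝ 1 p) :
    (modifiedEnergy Ω τ θ u' p' Q' - modifiedEnergy Ω τ θ u p Q) / τ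
      = ν * ipL2 Ω (vlap uh) uh + ipL2 Ω f uh := by
  obtain ⟨hpred, -, -, -, -, hmult⟩ := h
  have hint {v : Euc d → Euc d} (hv : Continuous v) : IntegrableOn (fun x ↦ ⟪v x, uh x⟫) Ω :=
    integrableOn_inner_of_continuous_of_isBounded hv huh.continuous hΩb
  have hrate : IntegrableOn (fun x ↦ ⟪(1 / τ) • (uh x - u x), uh x⟫) Ω :=
    hint ((huh.continuous.sub hu.continuous).fun_const_smul _)
  have hconv := (hint (continuous_conv hu.continuous hu)).const_mul Q'
  have hgrd := hint (continuous_grd hp)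
  have hvlap := (hint (continuous_vlap huh)).const_mul ν
  have htest : ipL2 Ω f uh = ipL2 Ω (fun x ↦ (1 / τ) • (uh x - u x)) uh + Q' * triB Ω u u uh
      + ipGrad Ω p uh - ν * ipL2 Ω (vlap uh) uh := by
    simp only [ipL2, triB, ipGrad]
    rw [← integral_const_mul, ← integral_const_mul, ← integral_add hrate hconv,
      ← integral_add (hrate.fun_add hconv) hgrd,
      ← integral_sub ((hrate.fun_add hconv).fun_add hgrd) hvlap]
    refine setIntegral_congr_fun hΩ fun x hx ↦ ?_
    simp only [← hpred x hx, inner_add_left, inner_sub_left, real_inner_smul_left]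
  unfold modifiedEnergy
  linear_combination hmult - htest

theorem modifiedEnergy_le (h : PDRLM1 Ω ν τ θ (fun _ ↦ 0) u p Q uh u' p' Q' nrm)
    (hΩ : MeasurableSet Ω) (hΩb : Bornology.IsBounded Ω) (hν : 0 ≤ ν) (hτ : 0 < τ)
    (hu : ContDiff ℝ 1 u) (huh : ContDiff ℝ 2 uh) (hp : ContDiff ℝ 1 p) :
    modifiedEnergy Ω τ θ u' p' Q' ≤ modifiedEnergy Ω τ θ u p Q := by
  have hbalance := h.modifiedEnergy_sub_div_eq hΩ hΩb hu huh hp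
  have hdiss : ν * ipL2 Ω (vlap uh) uh ≤ 0 :=
    mul_nonpos_of_nonneg_of_nonpos hν (ipL2_vlap_self_nonpos hΩ hΩb huh h.2.1)
  have hforce : ipL2 Ω (fun _ ↦ 0) uh = 0 := by simp [ipL2]
  rw [hforce, add_zero, div_eq_iff hτ.ne'] at hbalance
  exact sub_nonpos.1 (hbalance.trans_le (mul_nonpos_of_nonpos_of_nonneg hdiss hτ.le))

theorem antitoneOn_modifiedEnergy {N : ℕ} {U Uh : ℕ → Euc d → Euc d} {P : ℕ → Euc d → ℝ}
    {Q : ℕ → ℝ} (h : ∀ n < N, PDRLM1 Ω ν τ θ (fun _ ↦ 0)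
      (U n) (P n) (Q n) (Uh (n + 1)) (U (n + 1)) (P (n + 1)) (Q (n + 1)) nrm)
    (hΩ : MeasurableSet Ω) (hΩb : Bornology.IsBounded Ω) (hν : 0 ≤ ν) (hτ : 0 < τ)
    (hU : ∀ n, ContDiff ℝ 1 (U n)) (hUh : ∀ n, ContDiff ℝ 2 (Uh n))
    (hP : ∀ n, ContDiff ℝ 1 (P n)) :
    AntitoneOn (fun n ↦ modifiedEnergy Ω τ θ (U n) (P n) (Q n)) (Set.Iic N) :=
  antitoneOn_of_add_one_le Set.ordConnected_Iic fun n _ _ hn ↦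
    (h n hn).modifiedEnergy_le hΩ hΩb hν hτ (hU n) (hUh (n + 1)) (hP n)

end PDRLM1

end ModifiedEnergy

theorem pdrlm1_multiplier_and_velocity_uniform_bounds_general
    {d : ℕ} {Ω : Set (Euc d)} (hΩ : MeasurableSet Ω) (hΩb : Bornology.IsBounded Ω)
    {ν τ θ : ℝ} (hν : 0 ≤ ν) (hτ : 0 < τ) (hθ : 0 < θ) {N : ℕ}
    {U Uh : ℕ → Euc d → Euc d} {P : ℕ → Euc d → ℝ} {Q : ℕ → ℝ} (hQ0 : Q 0 = 1)
    {nrm : Euc d → Euc d} (hU : ∀ n, ContDiff ℝ 1 (U n)) (hUh : ∀ n, ContDiff ℝ 2 (Uh n))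
    (hP : ∀ n, ContDiff ℝ 1 (P n))
    (hscheme : ∀ n < N, PDRLM1 Ω ν τ θ (fun _ ↦ 0)
      (U n) (P n) (Q n) (Uh (n + 1)) (U (n + 1)) (P (n + 1)) (Q (n + 1)) nrm) :
    1 ≤ √(1 + (nsq Ω (U 0) + τ ^ 2 * gnsq Ω (P 0)) / (2 * θ))
    ∧ ∀ n ≤ N,
        |Q n| ≤ √(1 + (nsq Ω (U 0) + τ ^ 2 * gnsq Ω (P 0)) / (2 * θ))
        ∧ √(nsq Ω (U n)) ≤ √(nsq Ω (U 0) + τ ^ 2 * gnsq Ω (P 0) + 2 * θ) := by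
  let E : ℕ → ℝ := fun n ↦ modifiedEnergy Ω τ θ (U n) (P n) (Q n)
  have hE₀ : E 0 = (nsq Ω (U 0) + τ ^ 2 * gnsq Ω (P 0)) / 2 + θ := by
    simp only [E, modifiedEnergy, Ke, hQ0]
    ring
  have hC₀ : 1 + (nsq Ω (U 0) + τ ^ 2 * gnsq Ω (P 0)) / (2 * θ) = E 0 / θ := by
    rw [hE₀]
    field_simp
    ring
  have hM : nsq Ω (U 0) + τ ^ 2 * gnsq Ω (P 0) + 2 * θ = 2 * E 0 := by
    rw [hE₀]
    ring
  have hE : ∀ n ≤ N, E n ≤ E 0 := fun n hn ↦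
    PDRLM1.antitoneOn_modifiedEnergy hscheme hΩ hΩb hν hτ hU hUh hP N.zero_le hn n.zero_le
  have hQ : ∀ n ≤ N, |Q n| ≤ √(E 0 / θ) := fun n hn ↦
    (abs_le_sqrt_modifiedEnergy_div hθ).trans <|
      sqrt_le_sqrt (div_le_div_of_nonneg_right (hE n hn) hθ.le)
  have hvel : ∀ n ≤ N, √(nsq Ω (U n)) ≤ √(2 * E 0) := fun n hn ↦
    sqrt_le_sqrt <| (nsq_le_two_mul_modifiedEnergy hθ.le).trans <|
      mul_le_mul_of_nonneg_left (hE n hn) zero_le_two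
  rw [hC₀, hM]
  exact ⟨by simpa [hQ0] using hQ 0 N.zero_le, fun n hn ↦ ⟨hQ n hn, hvel n hn⟩⟩

/-- uniform bounds on the Lagrange multipliers and velocities of
the P-DRLM1 scheme with `f = 0`:
`Qⁿ ≤ C₀ = √(1 + (‖u⁰‖² + τ²‖∇p⁰‖²)/(2θ))` and
`‖uⁿ‖ ≤ M̃ = √(‖u⁰‖² + τ²‖∇p⁰‖² + 2θ)` for every `n = 0,…,N`, with `C₀ ≥ 1`,
for every time step `τ > 0`. -/
theorem pdrlm1_multiplier_and_velocity_uniform_bounds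
    {d : ℕ} (hd : d = 2 ∨ d = 3)
    (Ω : Set (Euc d)) (hΩo : IsOpen Ω) (hΩb : Bornology.IsBounded Ω) (hΩne : Ω.Nonempty)
    (ν : ℝ) (hν : ν ∈ Set.Ioo (0:ℝ) 1)
    (T : ℝ) (hT : 0 < T) (N : ℕ) (hN : 0 < N) (τ : ℝ) (hτ : τ = T / N) (hτpos : 0 < τ)
    (θ : ℝ) (hθ : 0 < θ)
    (U Uh : ℕ → Euc d → Euc d) (P : ℕ → Euc d → ℝ) (Q : ℕ → ℝ) (hQ0 : Q 0 = 1)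
    (hQpos : ∀ n, 0 < Q n)
    (nrm : Euc d → Euc d)
    -- smoothness of the discrete fields
    (hsU : ∀ n, ContDiff ℝ (⊤ : ℕ∞) (U n)) (hsUh : ∀ n, ContDiff ℝ (⊤ : ℕ∞) (Uh n))
    (hsP : ∀ n, ContDiff ℝ (⊤ : ℕ∞) (P n))
    -- the P-DRLM1 scheme in the absence of the external force
    (hscheme : ∀ n < N, PDRLM1 Ω ν τ θ (fun _ => (0 : Euc d))
      (U n) (P n) (Q n) (Uh (n+1)) (U (n+1)) (P (n+1)) (Q (n+1)) nrm) :
    1 ≤ Real.sqrt (1 + (nsq Ω (U 0) + τ^2 * gnsq Ω (P 0)) / (2*θ))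
    ∧ ∀ n ≤ N,
        Q n ≤ Real.sqrt (1 + (nsq Ω (U 0) + τ^2 * gnsq Ω (P 0)) / (2*θ))
        ∧ Real.sqrt (nsq Ω (U n))
            ≤ Real.sqrt (nsq Ω (U 0) + τ^2 * gnsq Ω (P 0) + 2*θ) := by
  obtain ⟨hC₀, hbound⟩ := pdrlm1_multiplier_and_velocity_uniform_bounds_general
    hΩo.measurableSet hΩb hν.1.le hτpos hθ hQ0 (fun n ↦ contDiff_infty.1 (hsU n) 1)
    (fun n ↦ contDiff_infty.1 (hsUh n) 2) (fun n ↦ contDiff_infty.1 (hsP n) 1) hscheme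
  exact ⟨hC₀, fun n hn ↦ (hbound n hn).imp_left (le_abs_self _).trans⟩
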